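/- Suppose X ∈ ℝ^{n₁×n₂} has rank r, y = 𝒜(X) + w with ‖w‖₂ ≤ ε, and ρ_{8r}^min(𝒜) > 0. Then any solution X̂ of the matrix Basis Pursuit program min_Z ‖Z‖_* subject to ‖y − 𝒜(Z)‖₂ ≤ ε satisfies ‖X̂ − X‖_F ≤ 2ε / ρ_{8r}^min(𝒜). -/

import Mathlib

open scoped BigOperators

noncomputable section

/-- Frobenius norm of a real matrix. -/
def frobNorm {n₁ n₂ : ℕ} (X : Matrix (Fin n₁) (Fin n₂) ℝ) : ℝ :=
  Real.sqrt (∑ i, ∑ j, (X i j) ^ 2)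

/-- Singular values of a real matrix: square roots of eigenvalues of `X * Xᴴ`. -/
def singVals {n₁ n₂ : ℕ} (X : Matrix (Fin n₁) (Fin n₂) ℝ) : Fin n₁ → ℝ :=
  fun i => Real.sqrt ((Matrix.isHermitian_mul_conjTranspose_self X).eigenvalues i)

/-- Nuclear norm: sum of singular values. -/
def nuclearNorm {n₁ n₂ : ℕ} (X : Matrix (Fin n₁) (Fin n₂) ℝ) : ℝ :=
  ∑ i, singVals X i

/-- Operator norm: largest singular value. -/
def matOpNorm {n₁ n₂ : ℕ} (X : Matrix (Fin n₁) (Fin n₂) ℝ) : ℝ :=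
  ⨆ i, singVals X i

/-- ℓ*-rank. -/
def lstarRank {n₁ n₂ : ℕ} (X : Matrix (Fin n₁) (Fin n₂) ℝ) : ℝ :=
  nuclearNorm X ^ 2 / frobNorm X ^ 2

/-- Euclidean norm of a vector. -/
def vnorm {m : ℕ} (v : Fin m → ℝ) : ℝ :=
  Real.sqrt (∑ k, (v k) ^ 2)

/-- Matrix inner product. -/
def matInner {n₁ n₂ : ℕ} (X Y : Matrix (Fin n₁) (Fin n₂) ℝ) : ℝ :=
  (X.transpose * Y).trace

def cmsvMin {n₁ n₂ m : ℕ} (A : Matrix (Fin n₁) (Fin n₂) ℝ → (Fin m → ℝ)) (τ : ℝ) : ℝ :=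
  sInf {c | ∃ X : Matrix (Fin n₁) (Fin n₂) ℝ, X ≠ 0 ∧ lstarRank X ≤ τ ∧ c = vnorm (A X) / frobNorm X}

def cmsvMax {n₁ n₂ m : ℕ} (A : Matrix (Fin n₁) (Fin n₂) ℝ → (Fin m → ℝ)) (τ : ℝ) : ℝ :=
  sSup {c | ∃ X : Matrix (Fin n₁) (Fin n₂) ℝ, X ≠ 0 ∧ lstarRank X ≤ τ ∧ c = vnorm (A X) / frobNorm X}

def rcsvMin {n₁ n₂ m : ℕ} (A : Matrix (Fin n₁) (Fin n₂) ℝ → (Fin m → ℝ)) (r : ℕ) : ℝ :=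
  sInf {c | ∃ X : Matrix (Fin n₁) (Fin n₂) ℝ, X ≠ 0 ∧ X.rank ≤ r ∧ c = vnorm (A X) / frobNorm X}

def rcsvMax {n₁ n₂ m : ℕ} (A : Matrix (Fin n₁) (Fin n₂) ℝ → (Fin m → ℝ)) (r : ℕ) : ℝ :=
  sSup {c | ∃ X : Matrix (Fin n₁) (Fin n₂) ℝ, X ≠ 0 ∧ X.rank ≤ r ∧ c = vnorm (A X) / frobNorm X}

def mRIC {n₁ n₂ m : ℕ} (A : Matrix (Fin n₁) (Fin n₂) ℝ → (Fin m → ℝ)) (r : ℕ) : ℝ :=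
  sInf {δ : ℝ | 0 < δ ∧ ∀ X : Matrix (Fin n₁) (Fin n₂) ℝ, X ≠ 0 → X.rank ≤ r →
    1 - δ ≤ (vnorm (A X)) ^ 2 / (frobNorm X) ^ 2 ∧ (vnorm (A X)) ^ 2 / (frobNorm X) ^ 2 ≤ 1 + δ}

def opOf {n₁ n₂ m : ℕ} (A : Fin m → Matrix (Fin n₁) (Fin n₂) ℝ) :
    Matrix (Fin n₁) (Fin n₂) ℝ → (Fin m → ℝ) :=
  fun X k => matInner (A k) X

/-! With `W` the partial isometry in the polar decomposition of `X`, split matrices along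
`P = W Wᴴ` and `Q = Wᴴ W`, and let `N H = (1 - P) H (1 - Q)`. Testing `X + H` against
`W + V`, where `V` is the polar partial isometry of `N H`, shows that `‖X + H‖_* ≤ ‖X‖_*` forces
`‖N H‖_* ≤ -⟪W, H⟫`. If `Z` is the polar partial isometry of `H`, then
`‖H‖_* = ⟪Z, H⟫ ≤ ⟪Z - N Z, H⟫ + ‖N H‖_* ≤ ⟪Z - N Z - W, H⟫`, and the left factor has squared
Frobenius norm at most `4 rank X`. So the error of Basis Pursuit has `ℓ*`-rank at most `4 rank X`,
and `ρ_τ^min` bounds it as soon as `4 rank X ≤ τ`. -/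

open Matrix

section PartialIsometry

variable {m n R : Type*} [Fintype m] [Fintype n]

/-- A matrix is a partial isometry if `W Wᴴ W = W`, equivalently if `Wᴴ W` and `W Wᴴ` are the
orthogonal projections onto its row and column spaces. -/
def IsPartialIsometry [NonUnitalSemiring R] [Star R] (W : Matrix m n R) : Prop :=
  W * Wᴴ * W = W

namespace IsPartialIsometry

section Semiring

variable [NonUnitalSemiring R] [StarRing R] {W V : Matrix m n R}

lemma conjTranspose (hW : IsPartialIsometry W) : IsPartialIsometry Wᴴ := by
  simpa [IsPartialIsometry, Matrix.mul_assoc] using congrArg Matrix.conjTranspose hW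

lemma isStarProjection_mul_conjTranspose (hW : IsPartialIsometry W) :
    IsStarProjection (W * Wᴴ) where
  isIdempotentElem := by rw [IsIdempotentElem, ← Matrix.mul_assoc, hW]
  isSelfAdjoint := isHermitian_mul_conjTranspose_self W

lemma isStarProjection_conjTranspose_mul (hW : IsPartialIsometry W) :
    IsStarProjection (Wᴴ * W) := by
  simpa using hW.conjTranspose.isStarProjection_mul_conjTranspose

lemma add (hW : IsPartialIsometry W) (hV : IsPartialIsometry V) (hl : Wᴴ * V = 0)
    (hr : V * Wᴴ = 0) : IsPartialIsometry (W + V) := by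
  have hl' : Vᴴ * W = 0 := by simpa using congrArg Matrix.conjTranspose hl
  have hr' : W * Vᴴ = 0 := by simpa using congrArg Matrix.conjTranspose hr
  have hgram : (W + V) * (W + V)ᴴ = W * Wᴴ + V * Vᴴ := by
    simp [Matrix.add_mul, Matrix.mul_add, hr, hr']
  rw [IsPartialIsometry, hgram, Matrix.add_mul, Matrix.mul_add, Matrix.mul_add, hW, hV,
    Matrix.mul_assoc, hl, Matrix.mul_assoc V, hl', Matrix.mul_zero, Matrix.mul_zero, add_zero,
    zero_add]

end Semiring

lemma trace_conjTranspose_mul [Field R] [PartialOrder R] [StarRing R] [StarOrderedRing R]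
    {W : Matrix m n R} (hW : IsPartialIsometry W) : (Wᴴ * W).trace = W.rank := by
  classical
  have hidem : IsIdempotentElem (toLin' (Wᴴ * W)) := by
    exact hW.isStarProjection_conjTranspose_mul.isIdempotentElem.map toLinAlgEquiv'
  rw [← trace_toLin'_eq, (LinearMap.IsIdempotentElem.isProj_range _ hidem).trace,
    ← rank_conjTranspose_mul_self]
  rfl

end IsPartialIsometry

/-- The compression `(1 - W Wᴴ) H (1 - Wᴴ W)`. When `W` is the polar partial isometry of `X`, it
is the component of `H` normal at `X` to the manifold of matrices of the same rank. -/
def normalPart [Ring R] [Star R] [DecidableEq m] [DecidableEq n] (W H : Matrix m n R) :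
    Matrix m n R :=
  (1 - W * Wᴴ) * H * (1 - Wᴴ * W)

section NormalPart

variable [Ring R] [StarRing R] [DecidableEq m] [DecidableEq n] {W : Matrix m n R}

lemma conjTranspose_mul_normalPart (hW : IsPartialIsometry W) (H : Matrix m n R) :
    Wᴴ * normalPart W H = 0 := by
  have h : Wᴴ * (1 - W * Wᴴ) = 0 := by
    simpa [Matrix.mul_sub, sub_eq_zero, Matrix.mul_assoc] using hW.conjTranspose.symm
  rw [normalPart, ← Matrix.mul_assoc, ← Matrix.mul_assoc, h, Matrix.zero_mul, Matrix.zero_mul]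

lemma normalPart_mul_conjTranspose (hW : IsPartialIsometry W) (H : Matrix m n R) :
    normalPart W H * Wᴴ = 0 := by
  have h : (1 - Wᴴ * W) * Wᴴ = 0 := by
    simpa [Matrix.sub_mul, sub_eq_zero] using hW.conjTranspose.symm
  rw [normalPart, Matrix.mul_assoc, h, Matrix.mul_zero]

lemma normalPart_eq_self {V : Matrix m n R} (hl : Wᴴ * V = 0) (hr : V * Wᴴ = 0) :
    normalPart W V = V := by
  simp [normalPart, Matrix.sub_mul, Matrix.mul_sub, Matrix.mul_assoc, hl, ← Matrix.mul_assoc V, hr]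

end NormalPart

end PartialIsometry

section PolarDecomposition

open scoped ComplexOrder

variable {m n 𝕜 : Type*} [Fintype m] [Fintype n] [DecidableEq m] [RCLike 𝕜]

lemma cfc_mul_cfc_matrix (f g : ℝ → ℝ) (A : Matrix m m 𝕜) :
    cfc f A * cfc g A = cfc (fun x ↦ f x * g x) A :=
  (cfc_mul f g A (A.finite_real_spectrum.continuousOn f)
    (A.finite_real_spectrum.continuousOn g)).symm

lemma self_mul_cfc_matrix {A : Matrix m m 𝕜} (hA : IsSelfAdjoint A) (f : ℝ → ℝ) :
    A * cfc f A = cfc (fun x ↦ x * f x) A := by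
  nth_rw 1 [← cfc_id' ℝ A hA]
  exact cfc_mul_cfc_matrix _ _ A

lemma trace_cfc {A : Matrix m m 𝕜} (hA : A.IsHermitian) (f : ℝ → ℝ) :
    (cfc f A).trace = ∑ i, (f (hA.eigenvalues i) : 𝕜) := by
  rw [hA.cfc_eq, IsHermitian.cfc, Unitary.conjStarAlgAut_apply, trace_mul_cycle,
    Unitary.coe_star_mul_self, Matrix.one_mul, trace_diagonal]
  rfl

/-- The partial isometry `W = (X Xᴴ)^(-1/2) X` of the polar decomposition `X = (X Xᴴ)^(1/2) W`.
The inverse square root is a pseudo-inverse: Lean's `0⁻¹ = 0` makes it vanish on the kernel. -/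
def polarFactor (X : Matrix m n 𝕜) : Matrix m n 𝕜 :=
  cfc (fun x ↦ (√x)⁻¹) (X * Xᴴ) * X

lemma nonneg_of_mem_spectrum_mul_conjTranspose {X : Matrix m n 𝕜} {x : ℝ}
    (hx : x ∈ spectrum ℝ (X * Xᴴ)) : 0 ≤ x := by
  rw [(isHermitian_mul_conjTranspose_self X).spectrum_real_eq_range_eigenvalues] at hx
  obtain ⟨i, rfl⟩ := hx
  exact (posSemidef_self_mul_conjTranspose X).eigenvalues_nonneg i

lemma polarFactor_mul_conjTranspose_self (X : Matrix m n 𝕜) :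
    polarFactor X * (polarFactor X)ᴴ = cfc (fun x ↦ √x * (√x)⁻¹) (X * Xᴴ) := by
  have hself : (cfc (fun x ↦ (√x)⁻¹) (X * Xᴴ))ᴴ = cfc (fun x ↦ (√x)⁻¹) (X * Xᴴ) :=
    IsSelfAdjoint.cfc
  rw [polarFactor, conjTranspose_mul, hself, Matrix.mul_assoc, ← Matrix.mul_assoc X,
    self_mul_cfc_matrix (isHermitian_mul_conjTranspose_self X).isSelfAdjoint, cfc_mul_cfc_matrix]
  simp only [← div_eq_mul_inv, Real.div_sqrt, mul_comm]

lemma polarFactor_mul_conjTranspose_self_eq_mul_cfc_inv (X : Matrix m n 𝕜) :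
    polarFactor X * (polarFactor X)ᴴ = X * Xᴴ * cfc (·⁻¹ : ℝ → ℝ) (X * Xᴴ) := by
  rw [polarFactor_mul_conjTranspose_self,
    self_mul_cfc_matrix (isHermitian_mul_conjTranspose_self X).isSelfAdjoint]
  refine cfc_congr fun x hx ↦ ?_
  rcases (nonneg_of_mem_spectrum_mul_conjTranspose hx).eq_or_lt with rfl | hpos
  · simp
  · simp [hpos.ne', (Real.sqrt_pos.2 hpos).ne']

lemma polarFactor_mul_conjTranspose_mul (X : Matrix m n 𝕜) :
    polarFactor X * (polarFactor X)ᴴ * X = X := by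
  have hself : IsSelfAdjoint (X * Xᴴ) := isHermitian_mul_conjTranspose_self X
  have hgram : polarFactor X * (polarFactor X)ᴴ * (X * Xᴴ) = X * Xᴴ := by
    rw [polarFactor_mul_conjTranspose_self_eq_mul_cfc_inv, Matrix.mul_assoc,
      ((Commute.refl (X * Xᴴ)).cfc_real _).eq, self_mul_cfc_matrix hself,
      self_mul_cfc_matrix hself]
    conv_rhs => rw [← cfc_id' ℝ (X * Xᴴ) hself]
    simp only [← mul_assoc, mul_self_mul_inv]
  have h : (polarFactor X * (polarFactor X)ᴴ - 1) * (X * Xᴴ) = 0 := by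
    rw [Matrix.sub_mul, Matrix.one_mul, hgram, sub_self]
  rwa [mul_self_mul_conjTranspose_eq_zero, Matrix.sub_mul, Matrix.one_mul, sub_eq_zero] at h

lemma isPartialIsometry_polarFactor (X : Matrix m n 𝕜) : IsPartialIsometry (polarFactor X) := by
  rw [IsPartialIsometry, polarFactor_mul_conjTranspose_self, polarFactor, ← Matrix.mul_assoc,
    cfc_mul_cfc_matrix]
  congr 3 with x
  simpa [mul_comm] using mul_inv_mul_cancel (√x)⁻¹

lemma cfc_sqrt_mul_polarFactor (X : Matrix m n 𝕜) :
    cfc Real.sqrt (X * Xᴴ) * polarFactor X = X := by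
  rw [polarFactor, ← Matrix.mul_assoc, cfc_mul_cfc_matrix, ← polarFactor_mul_conjTranspose_self,
    polarFactor_mul_conjTranspose_mul]

lemma mul_polarFactor_eq_zero {l : Type*} {A : Matrix l m 𝕜} {X : Matrix m n 𝕜}
    (h : A * X = 0) : A * polarFactor X = 0 := by
  have hgram : A * (X * Xᴴ) = 0 := by rw [← Matrix.mul_assoc, h, Matrix.zero_mul]
  rw [← mul_self_mul_conjTranspose_eq_zero, polarFactor_mul_conjTranspose_self_eq_mul_cfc_inv,
    ← Matrix.mul_assoc, hgram, Matrix.zero_mul]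

lemma polarFactor_mul_eq_zero {l : Type*} {X : Matrix m n 𝕜} {B : Matrix n l 𝕜}
    (h : X * B = 0) : polarFactor X * B = 0 := by
  rw [polarFactor, Matrix.mul_assoc, h, Matrix.mul_zero]

lemma rank_polarFactor (X : Matrix m n 𝕜) : (polarFactor X).rank = X.rank := by
  refine le_antisymm (rank_mul_le_right _ _) ?_
  conv_lhs => rw [← cfc_sqrt_mul_polarFactor X]
  exact rank_mul_le_right _ _

end PolarDecomposition

section FrobeniusGeometry

variable {p n₁ n₂ : ℕ}

lemma matInner_eq_sum (X Y : Matrix (Fin n₁) (Fin n₂) ℝ) :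
    matInner X Y = ∑ ij : Fin n₁ × Fin n₂, X ij.1 ij.2 * Y ij.1 ij.2 := by
  rw [Fintype.sum_prod_type, Finset.sum_comm]
  simp [matInner, trace, mul_apply]

lemma matInner_eq_trace_conjTranspose_mul (X Y : Matrix (Fin n₁) (Fin n₂) ℝ) :
    matInner X Y = (Xᴴ * Y).trace := by
  rw [conjTranspose_eq_transpose_of_trivial, matInner]

lemma matInner_add_left (X Y Z : Matrix (Fin n₁) (Fin n₂) ℝ) :
    matInner (X + Y) Z = matInner X Z + matInner Y Z := by
  simp [matInner, Matrix.add_mul]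

lemma matInner_sub_left (X Y Z : Matrix (Fin n₁) (Fin n₂) ℝ) :
    matInner (X - Y) Z = matInner X Z - matInner Y Z := by
  simp [matInner, Matrix.sub_mul]

lemma matInner_add_right (X Y Z : Matrix (Fin n₁) (Fin n₂) ℝ) :
    matInner X (Y + Z) = matInner X Y + matInner X Z := by
  simp [matInner, Matrix.mul_add]

lemma matInner_mul_left (A : Matrix (Fin n₁) (Fin p) ℝ) (X : Matrix (Fin p) (Fin n₂) ℝ)
    (Y : Matrix (Fin n₁) (Fin n₂) ℝ) : matInner (A * X) Y = matInner X (Aᴴ * Y) := by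
  simp only [matInner_eq_trace_conjTranspose_mul, conjTranspose_mul, Matrix.mul_assoc]

lemma matInner_mul_right (X : Matrix (Fin n₁) (Fin p) ℝ) (B : Matrix (Fin p) (Fin n₂) ℝ)
    (Y : Matrix (Fin n₁) (Fin n₂) ℝ) : matInner (X * B) Y = matInner X (Y * Bᴴ) := by
  simp only [matInner_eq_trace_conjTranspose_mul, conjTranspose_mul]
  rw [Matrix.mul_assoc, trace_mul_comm, Matrix.mul_assoc]

lemma frobNorm_nonneg (X : Matrix (Fin n₁) (Fin n₂) ℝ) : 0 ≤ frobNorm X :=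
  Real.sqrt_nonneg _

lemma frobNorm_sq (X : Matrix (Fin n₁) (Fin n₂) ℝ) : frobNorm X ^ 2 = matInner X X := by
  rw [frobNorm, Real.sq_sqrt (by positivity), matInner_eq_sum, Fintype.sum_prod_type]
  simp only [sq]

lemma frobNorm_pos {X : Matrix (Fin n₁) (Fin n₂) ℝ} (hX : X ≠ 0) : 0 < frobNorm X := by
  refine (frobNorm_nonneg X).lt_of_ne' fun h ↦ hX ?_
  rwa [← sq_eq_zero_iff, frobNorm_sq, matInner_eq_trace_conjTranspose_mul,
    trace_conjTranspose_mul_self_eq_zero_iff] at h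

lemma frobNorm_conjTranspose (X : Matrix (Fin n₁) (Fin n₂) ℝ) : frobNorm Xᴴ = frobNorm X := by
  rw [frobNorm, frobNorm, Finset.sum_comm]
  simp

lemma matInner_le_frobNorm_mul_frobNorm (X Y : Matrix (Fin n₁) (Fin n₂) ℝ) :
    matInner X Y ≤ frobNorm X * frobNorm Y := by
  simp only [frobNorm, ← Fintype.sum_prod_type', matInner_eq_sum]
  exact Real.sum_mul_le_sqrt_mul_sqrt _ _ _

lemma frobNorm_add_sq (X Y : Matrix (Fin n₁) (Fin n₂) ℝ) :
    frobNorm (X + Y) ^ 2 = frobNorm X ^ 2 + 2 * matInner X Y + frobNorm Y ^ 2 := by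
  simp only [frobNorm_sq, matInner_eq_sum, Finset.mul_sum, ← Finset.sum_add_distrib,
    Matrix.add_apply]
  exact Finset.sum_congr rfl fun _ _ ↦ by ring

lemma frobNorm_sub_sq (X Y : Matrix (Fin n₁) (Fin n₂) ℝ) :
    frobNorm (X - Y) ^ 2 = frobNorm X ^ 2 - 2 * matInner X Y + frobNorm Y ^ 2 := by
  simp only [frobNorm_sq, matInner_eq_sum, Finset.mul_sum, ← Finset.sum_add_distrib,
    ← Finset.sum_sub_distrib, Matrix.sub_apply]
  exact Finset.sum_congr rfl fun _ _ ↦ by ring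

lemma matInner_mul_mul_of_isStarProjection {P : Matrix (Fin n₁) (Fin n₁) ℝ}
    (hP : IsStarProjection P) (X Y : Matrix (Fin n₁) (Fin n₂) ℝ) :
    matInner (P * X) (P * Y) = matInner X (P * Y) := by
  have hP' : Pᴴ = P := hP.isSelfAdjoint
  rw [matInner_mul_left, hP', ← Matrix.mul_assoc, hP.isIdempotentElem]

lemma frobNorm_sq_eq_add_of_isStarProjection {P : Matrix (Fin n₁) (Fin n₁) ℝ}
    (hP : IsStarProjection P) (X : Matrix (Fin n₁) (Fin n₂) ℝ) :
    frobNorm X ^ 2 = frobNorm (P * X) ^ 2 + frobNorm ((1 - P) * X) ^ 2 := by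
  rw [frobNorm_sq (P * X), frobNorm_sq ((1 - P) * X), matInner_mul_mul_of_isStarProjection hP,
    matInner_mul_mul_of_isStarProjection hP.one_sub, ← matInner_add_right, ← Matrix.add_mul,
    add_sub_cancel, Matrix.one_mul, frobNorm_sq]

lemma IsPartialIsometry.frobNorm_mul_le_right {W : Matrix (Fin p) (Fin n₁) ℝ}
    (hW : IsPartialIsometry W) (X : Matrix (Fin n₁) (Fin n₂) ℝ) :
    frobNorm (W * X) ≤ frobNorm X := by
  have hQ := hW.isStarProjection_conjTranspose_mul
  have hsq : frobNorm (Wᴴ * W * X) ^ 2 = frobNorm (W * X) ^ 2 := by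
    rw [frobNorm_sq, frobNorm_sq, matInner_mul_mul_of_isStarProjection hQ, matInner_mul_left,
      Matrix.mul_assoc]
  rw [← sq_le_sq₀ (frobNorm_nonneg _) (frobNorm_nonneg _), ← hsq,
    frobNorm_sq_eq_add_of_isStarProjection hQ X]
  exact le_add_of_nonneg_right (sq_nonneg _)

lemma IsPartialIsometry.frobNorm_mul_le_left {W : Matrix (Fin n₁) (Fin n₂) ℝ}
    (hW : IsPartialIsometry W) (X : Matrix (Fin p) (Fin n₁) ℝ) :
    frobNorm (X * W) ≤ frobNorm X := by
  rw [← frobNorm_conjTranspose, ← frobNorm_conjTranspose X, conjTranspose_mul]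
  exact hW.conjTranspose.frobNorm_mul_le_right _

lemma matInner_normalPart (W X Y : Matrix (Fin n₁) (Fin n₂) ℝ) :
    matInner (normalPart W X) Y = matInner X (normalPart W Y) := by
  have hP : (1 - W * Wᴴ)ᴴ = 1 - W * Wᴴ := by simp
  have hQ : (1 - Wᴴ * W)ᴴ = 1 - Wᴴ * W := by simp
  rw [normalPart, normalPart, matInner_mul_right, matInner_mul_left, hP, hQ, Matrix.mul_assoc]

/- Block form: with `P = W Wᴴ` and `Q = Wᴴ W`, one has
`‖Z - N Z - W‖² + ‖P Z Q + W‖² = ‖P Z‖² + ‖Z Q‖² + 2 ‖W‖²`. Dropping the second square, rather than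
using the triangle inequality, is what gives the constant `4`. -/
lemma frobNorm_sub_normalPart_sub_sq_le {W Z : Matrix (Fin n₁) (Fin n₂) ℝ}
    (hW : IsPartialIsometry W) (hZ : IsPartialIsometry Z) :
    frobNorm (Z - normalPart W Z - W) ^ 2 ≤ 4 * frobNorm W ^ 2 := by
  set P := W * Wᴴ with hP
  set Q := Wᴴ * W with hQ
  have hPproj : IsStarProjection P := hW.isStarProjection_mul_conjTranspose
  have hPW : P * W = W := hW
  have hWQ : W * Qᴴ = W := by
    rw [hQ, (isHermitian_conjTranspose_mul_self W).eq, ← Matrix.mul_assoc, hW]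
  have hrow : P * (Z - normalPart W Z - W) = P * Z - W := by
    rw [Matrix.mul_sub, Matrix.mul_sub, hPW, hP, Matrix.mul_assoc W Wᴴ (normalPart W Z),
      conjTranspose_mul_normalPart hW, Matrix.mul_zero, sub_zero]
  have hcompl : (1 - P) * (Z - normalPart W Z - W) = (1 - P) * (Z * Q) := by
    rw [Matrix.sub_mul, Matrix.one_mul, hrow, normalPart, ← hP, ← hQ, Matrix.mul_sub,
      Matrix.mul_one, Matrix.mul_assoc, Matrix.sub_mul 1 P Z, Matrix.one_mul]
    abel
  have hPZ : frobNorm (P * Z) ^ 2 ≤ frobNorm W ^ 2 := by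
    gcongr
    · exact frobNorm_nonneg _
    · exact (hZ.frobNorm_mul_le_left P).trans (hW.conjTranspose.frobNorm_mul_le_left W)
  have hZQ : frobNorm (Z * Q) ^ 2 ≤ frobNorm W ^ 2 := by
    gcongr
    · exact frobNorm_nonneg _
    · exact (hZ.frobNorm_mul_le_right Q).trans (hW.conjTranspose.frobNorm_mul_le_right W)
  have hinner : matInner (P * (Z * Q)) W = matInner (P * Z) W := by
    rw [← Matrix.mul_assoc, matInner_mul_right, hWQ]
  have hK := frobNorm_sq_eq_add_of_isStarProjection hPproj (Z - normalPart W Z - W)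
  rw [hrow, hcompl, frobNorm_sub_sq (P * Z)] at hK
  have hpyth := frobNorm_sq_eq_add_of_isStarProjection hPproj (Z * Q)
  have hdrop := frobNorm_add_sq (P * (Z * Q)) W
  linarith [sq_nonneg (frobNorm (P * (Z * Q) + W))]

end FrobeniusGeometry

section NuclearNorm

variable {n₁ n₂ : ℕ}

lemma nuclearNorm_nonneg (X : Matrix (Fin n₁) (Fin n₂) ℝ) : 0 ≤ nuclearNorm X :=
  Finset.sum_nonneg fun _ _ ↦ Real.sqrt_nonneg _

lemma trace_cfc_sqrt_mul_conjTranspose (X : Matrix (Fin n₁) (Fin n₂) ℝ) :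
    (cfc Real.sqrt (X * Xᴴ)).trace = nuclearNorm X :=
  trace_cfc (isHermitian_mul_conjTranspose_self X) _

lemma matInner_polarFactor_self (X : Matrix (Fin n₁) (Fin n₂) ℝ) :
    matInner (polarFactor X) X = nuclearNorm X := by
  have htrace : matInner (polarFactor X) X =
      (cfc Real.sqrt (X * Xᴴ) * (polarFactor X * (polarFactor X)ᴴ)).trace := by
    rw [← Matrix.mul_assoc, cfc_sqrt_mul_polarFactor, matInner_eq_trace_conjTranspose_mul,
      trace_mul_comm]
  rw [htrace, polarFactor_mul_conjTranspose_self, cfc_mul_cfc_matrix]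
  simp only [← mul_assoc, mul_self_mul_inv, trace_cfc_sqrt_mul_conjTranspose]

lemma frobNorm_polarFactor_sq (X : Matrix (Fin n₁) (Fin n₂) ℝ) :
    frobNorm (polarFactor X) ^ 2 = X.rank := by
  rw [frobNorm_sq, matInner_eq_trace_conjTranspose_mul,
    (isPartialIsometry_polarFactor X).trace_conjTranspose_mul, rank_polarFactor]

/- Write `X = R² W` with `R = (X Xᴴ)^(1/4)` and apply Cauchy–Schwarz to `⟪R C, R W⟫`. -/
lemma IsPartialIsometry.matInner_le_nuclearNorm {C : Matrix (Fin n₁) (Fin n₂) ℝ}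
    (hC : IsPartialIsometry C) (X : Matrix (Fin n₁) (Fin n₂) ℝ) :
    matInner C X ≤ nuclearNorm X := by
  set R := cfc (fun x ↦ √√x) (X * Xᴴ) with hR
  set W := polarFactor X
  have hself : Rᴴ = R := IsSelfAdjoint.cfc
  have hRR : R * R = cfc Real.sqrt (X * Xᴴ) := by
    rw [hR, cfc_mul_cfc_matrix]
    simp only [Real.mul_self_sqrt (Real.sqrt_nonneg _)]
  have hX : R * (R * W) = X := by
    rw [← Matrix.mul_assoc, hRR, cfc_sqrt_mul_polarFactor]
  calc matInner C X = matInner (R * C) (R * W) := by rw [matInner_mul_left, hself, hX]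
    _ ≤ frobNorm (R * C) * frobNorm (R * W) := matInner_le_frobNorm_mul_frobNorm _ _
    _ ≤ frobNorm R * frobNorm R :=
        mul_le_mul (hC.frobNorm_mul_le_left R)
          ((isPartialIsometry_polarFactor X).frobNorm_mul_le_left R)
          (frobNorm_nonneg _) (frobNorm_nonneg _)
    _ = nuclearNorm X := by
        rw [← sq, frobNorm_sq, matInner_eq_trace_conjTranspose_mul, hself, hRR,
          trace_cfc_sqrt_mul_conjTranspose]

lemma nuclearNorm_add_matInner_add_nuclearNorm_normalPart_le (X H : Matrix (Fin n₁) (Fin n₂) ℝ) :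
    nuclearNorm X + matInner (polarFactor X) H + nuclearNorm (normalPart (polarFactor X) H) ≤
      nuclearNorm (X + H) := by
  set W := polarFactor X with hWdef
  set V := polarFactor (normalPart W H) with hVdef
  have hW : IsPartialIsometry W := isPartialIsometry_polarFactor X
  have hl : Wᴴ * V = 0 := mul_polarFactor_eq_zero (conjTranspose_mul_normalPart hW H)
  have hr : V * Wᴴ = 0 := polarFactor_mul_eq_zero (normalPart_mul_conjTranspose hW H)
  have hVX : matInner V X = 0 := by
    have hVW : Vᴴ * W = 0 := by simpa using congrArg conjTranspose hl
    rw [← polarFactor_mul_conjTranspose_mul X, ← hWdef, Matrix.mul_assoc,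
      matInner_eq_trace_conjTranspose_mul, ← Matrix.mul_assoc, hVW, Matrix.zero_mul, trace_zero]
  have hVH : matInner V H = nuclearNorm (normalPart W H) := by
    rw [← matInner_polarFactor_self, ← hVdef, ← matInner_normalPart, normalPart_eq_self hl hr]
  calc nuclearNorm X + matInner W H + nuclearNorm (normalPart W H)
      = matInner (W + V) (X + H) := by
        rw [matInner_add_left, matInner_add_right, matInner_add_right, hVX, hVH,
          matInner_polarFactor_self]
        ring
    _ ≤ nuclearNorm (X + H) :=
        (hW.add (isPartialIsometry_polarFactor _) hl hr).matInner_le_nuclearNorm _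

lemma nuclearNorm_le_matInner_add_nuclearNorm_normalPart
    (W H : Matrix (Fin n₁) (Fin n₂) ℝ) :
    nuclearNorm H ≤ matInner (polarFactor H - normalPart W (polarFactor H)) H +
      nuclearNorm (normalPart W H) := by
  have hle := (isPartialIsometry_polarFactor H).matInner_le_nuclearNorm (normalPart W H)
  rw [matInner_sub_left, matInner_polarFactor_self, matInner_normalPart]
  linarith

lemma lstarRank_le_of_nuclearNorm_add_le {X H : Matrix (Fin n₁) (Fin n₂) ℝ}
    (h : nuclearNorm (X + H) ≤ nuclearNorm X) : lstarRank H ≤ 4 * X.rank := by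
  set W := polarFactor X
  set Z := polarFactor H
  have hcone := nuclearNorm_add_matInner_add_nuclearNorm_normalPart_le X H
  have hsplit := nuclearNorm_le_matInner_add_nuclearNorm_normalPart W H
  have hbound : nuclearNorm H ≤ frobNorm (Z - normalPart W Z - W) * frobNorm H :=
    calc nuclearNorm H ≤ matInner (Z - normalPart W Z - W) H := by
          rw [matInner_sub_left]
          linarith
      _ ≤ _ := matInner_le_frobNorm_mul_frobNorm _ _
  refine div_le_of_le_mul₀ (sq_nonneg _) (by positivity) ?_
  calc nuclearNorm H ^ 2 ≤ frobNorm (Z - normalPart W Z - W) ^ 2 * frobNorm H ^ 2 := by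
        rw [← mul_pow]
        exact pow_le_pow_left₀ (nuclearNorm_nonneg H) hbound 2
    _ ≤ 4 * frobNorm W ^ 2 * frobNorm H ^ 2 := by
        gcongr
        exact frobNorm_sub_normalPart_sub_sq_le (isPartialIsometry_polarFactor X)
          (isPartialIsometry_polarFactor H)
    _ = 4 * X.rank * frobNorm H ^ 2 := by rw [frobNorm_polarFactor_sq]

end NuclearNorm

section BasisPursuit

variable {n₁ n₂ m : ℕ}

lemma vnorm_sub_le (u v : Fin m → ℝ) : vnorm (u - v) ≤ vnorm u + vnorm v := by
  have hnorm (v : Fin m → ℝ) : vnorm v = ‖WithLp.toLp 2 v‖ := by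
    simp [vnorm, EuclideanSpace.norm_eq]
  simpa only [hnorm, WithLp.toLp_sub] using norm_sub_le _ _

lemma cmsvMin_mul_frobNorm_le (A : Matrix (Fin n₁) (Fin n₂) ℝ → (Fin m → ℝ)) {τ : ℝ}
    {X : Matrix (Fin n₁) (Fin n₂) ℝ} (hX : X ≠ 0) (hτ : lstarRank X ≤ τ) :
    cmsvMin A τ * frobNorm X ≤ vnorm (A X) := by
  rw [← le_div_iff₀ (frobNorm_pos hX)]
  refine csInf_le ⟨0, ?_⟩ ⟨X, hX, hτ, rfl⟩
  rintro _ ⟨Y, -, -, rfl⟩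
  exact div_nonneg (Real.sqrt_nonneg _) (frobNorm_nonneg _)

theorem stmt6_general (𝒜 : Matrix (Fin n₁) (Fin n₂) ℝ →+ (Fin m → ℝ))
    {X Xhat : Matrix (Fin n₁) (Fin n₂) ℝ} {y : Fin m → ℝ} {ε τ : ℝ}
    (hτ : 4 * X.rank ≤ τ) (hρ : 0 < cmsvMin 𝒜 τ)
    (hX : vnorm (y - 𝒜 X) ≤ ε) (hXhat : vnorm (y - 𝒜 Xhat) ≤ ε)
    (hle : nuclearNorm Xhat ≤ nuclearNorm X) :
    frobNorm (Xhat - X) ≤ 2 * ε / cmsvMin 𝒜 τ := by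
  rw [le_div_iff₀' hρ]
  by_cases hH : Xhat - X = 0
  · have hε : 0 ≤ ε := (Real.sqrt_nonneg _).trans hX
    rw [hH]
    simpa [frobNorm] using hε
  have hrank : lstarRank (Xhat - X) ≤ τ :=
    (lstarRank_le_of_nuclearNorm_add_le (by rwa [add_sub_cancel])).trans hτ
  calc cmsvMin 𝒜 τ * frobNorm (Xhat - X) ≤ vnorm (𝒜 (Xhat - X)) :=
        cmsvMin_mul_frobNorm_le 𝒜 hH hrank
    _ = vnorm (y - 𝒜 X - (y - 𝒜 Xhat)) := by rw [map_sub, sub_sub_sub_cancel_left]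
    _ ≤ vnorm (y - 𝒜 X) + vnorm (y - 𝒜 Xhat) := vnorm_sub_le _ _
    _ ≤ 2 * ε := by linarith

end BasisPursuit

/-- stability of matrix Basis Pursuit. -/
theorem stmt6 {n₁ n₂ m : ℕ} (hn : n₁ ≤ n₂)
    (𝒜 : Matrix (Fin n₁) (Fin n₂) ℝ →ₗ[ℝ] (Fin m → ℝ))
    (X : Matrix (Fin n₁) (Fin n₂) ℝ) (r : ℕ) (hrank : X.rank = r)
    (w : Fin m → ℝ) (ε : ℝ) (hw : vnorm w ≤ ε)
    (y : Fin m → ℝ) (hy : y = 𝒜 X + w)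
    (hρ : 0 < cmsvMin (⇑𝒜) (8 * (r : ℝ)))
    (Xhat : Matrix (Fin n₁) (Fin n₂) ℝ)
    (hfeas : vnorm (y - 𝒜 Xhat) ≤ ε)
    (hopt : ∀ Z : Matrix (Fin n₁) (Fin n₂) ℝ,
      vnorm (y - 𝒜 Z) ≤ ε → nuclearNorm Xhat ≤ nuclearNorm Z) :
    frobNorm (Xhat - X) ≤ 2 * ε / cmsvMin (⇑𝒜) (8 * (r : ℝ)) := by
  have hX : vnorm (y - 𝒜 X) ≤ ε := by rwa [hy, add_sub_cancel_left]
  exact stmt6_general 𝒜.toAddMonoidHom (by rw [hrank]; gcongr; norm_num) hρ hX hfeas (hopt X hX)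

end
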